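/- Let F be a p-adic field with ring of integers O_F, let E be a cubic étale F-algebra, let O_E be the integral closure of O_F in E, and let i : E → M₃(F) be an injective F-algebra homomorphism with i(O_E) ⊆ M₃(O_F). Then O_F³, regarded as an O_E-module via x · v := i(x)v, is isomorphic to O_E as an O_E-module (i.e., it is free of rank 1 over O_E). -/

import Mathlib

/-!
A cubic étale algebra `E` over a `p`-adic field `F` is a finite product of finite extensions `K m`
of `ℚ_[p]`. Embedding it in `M₃(F)` makes `F³` a faithful `E`-module, so `F³` contains a vector `w`
with trivial annihilator, and comparing dimensions shows that `x ↦ i(x)w` identifies `E` with `F³`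
(`exists_separating_vector`). The preimage `N` of `O_F³` under this identification is a finitely
generated `O_E`-submodule of `E`, and it contains a nonzero scalar.

The idempotents of `E` are integral, so `N` is the product of its components, each of which is a
nonzero fractional ideal of the ring of integers of `K m`. That ring is a Dedekind domain with
finitely many maximal ideals, hence a principal ideal domain
(`isPrincipalIdealRing_integralClosure`). The generators of the components assemble to a unit `u`
of `E` with `N = O_E u` (`exists_generator_pi`), and `v = i(u)w` is the vector sought.

All integrality is measured over `ℤ_[p]`. For this to describe `O_E`, the structure map `O_F → E`
has to restrict to the canonical map on `ℤ_[p]`; every ring homomorphism from `ℤ_[p]` to a finite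
extension of `ℚ_[p]` is the canonical one (`ringHom_eq_algebraMap`).
-/

/-- Hensel's lemma: `1 + p x` is an `n`-th power in `ℤ_[p]` whenever `n ≡ 1 [MOD p]`. -/
lemma exists_root_one_add (p : ℕ) [Fact p.Prime] (x : ℤ_[p]) (N : ℕ) :
    ∃ z : ℤ_[p], z ^ (p * N + 1) = 1 + p * x := by
  let f : Polynomial ℤ_[p] := Polynomial.X ^ (p * N + 1) - Polynomial.C (1 + p * x)
  have hp1 : ∀ y : ℤ_[p], ‖(p : ℤ_[p]) * y‖ < 1 := fun y => by
    rw [norm_mul]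
    exact (mul_le_of_le_one_right (norm_nonneg _) (PadicInt.norm_le_one y)).trans_lt
      (by rw [PadicInt.norm_p]
          exact inv_lt_one_of_one_lt₀ (by exact_mod_cast (Fact.out : p.Prime).one_lt))
  have h1 : f.aeval (1 : ℤ_[p]) = -(p * x) := by simp [f]
  have h2 : f.derivative.aeval (1 : ℤ_[p]) = 1 + p * N := by
    simp [f]
    ring
  have h3 : ‖(1 + p * N : ℤ_[p])‖ = 1 := by
    have h := PadicInt.norm_add_eq_max_of_ne (p := p) (q := (1 : ℤ_[p])) (r := p * N)
      (by rw [norm_one]; exact (hp1 N).ne')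
    rw [h, norm_one]
    exact max_eq_left (hp1 N).le
  obtain ⟨z, hz, -⟩ := hensels_lemma (p := p) (F := f) (a := (1 : ℤ_[p]))
    (by rw [h1, h2, h3, norm_neg]; simpa using hp1 x)
  refine ⟨z, ?_⟩
  simpa [f, sub_eq_zero] using hz

/-- A ring homomorphism from `ℤ_[p]` to a finite extension `K` of `ℚ_[p]` is the canonical one,
with no continuity assumed. As `1 + p x` is an `n`-th power for arbitrarily large `n`, the discrete
valuations of its image are `≤ 1`; hence `p φ(x)` is integral for every `x`. Writing
`x = a + p ^ n y` with `a` a natural number shows that `p (φ(x) - x)` is divisible by `p ^ n` among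
the integral elements, for every `n`. -/
lemma ringHom_eq_algebraMap (p : ℕ) [Fact p.Prime]
    (K : Type*) [Field K] [Algebra ℚ_[p] K] [FiniteDimensional ℚ_[p] K]
    [Algebra ℤ_[p] K] [IsScalarTower ℤ_[p] ℚ_[p] K] (φ : ℤ_[p] →+* K) (x : ℤ_[p]) :
    φ x = algebraMap ℤ_[p] K x := by
  have : IsDedekindDomain (integralClosure ℤ_[p] K) :=
    IsIntegralClosure.isDedekindDomain ℤ_[p] ℚ_[p] K _
  have : IsFractionRing (integralClosure ℤ_[p] K) K :=
    integralClosure.isFractionRing_of_finite_extension ℚ_[p] K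
  have : Module.Finite ℤ_[p] (integralClosure ℤ_[p] K) :=
    IsIntegralClosure.finite ℤ_[p] ℚ_[p] K _
  have hbdd : ∀ y : ℤ_[p], ∃ b : integralClosure ℤ_[p] K, (b : K) = p * φ y := by
    intro y
    obtain ⟨b, hb⟩ := IsDedekindDomain.HeightOneSpectrum.mem_integers_of_valuation_le_one
      (R := integralClosure ℤ_[p] K) K (φ (1 + p * y)) fun v => by
        by_contra! hlt
        have hlog : 0 < WithZero.log (v.valuation K (φ (1 + p * y))) := by
          rw [← WithZero.log_one]
          exact (WithZero.log_lt_log one_ne_zero (zero_lt_one.trans hlt).ne').mpr hlt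
        set l := WithZero.log (v.valuation K (φ (1 + p * y))) with hl
        obtain ⟨z, hz⟩ := exists_root_one_add p y l.toNat
        rw [← hz, map_pow, map_pow, WithZero.log_pow, nsmul_eq_mul] at hl
        have hdvd : ((p * l.toNat + 1 : ℕ) : ℤ) ∣ l := ⟨_, hl⟩
        have hle := Int.le_of_dvd hlog hdvd
        have hp : l.toNat ≤ p * l.toNat :=
          Nat.le_mul_of_pos_left _ (Fact.out : p.Prime).pos
        omega
    refine ⟨b - 1, ?_⟩
    have hb' : (b : K) = φ (1 + p * y) := hb
    simp [hb']
  obtain ⟨b, hb⟩ := hbdd x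
  have hzero : b - p * algebraMap ℤ_[p] _ x = 0 := by
    have hK := Ideal.iInf_pow_smul_eq_bot_of_isLocalRing (R := ℤ_[p])
      (M := integralClosure ℤ_[p] K) (IsLocalRing.maximalIdeal ℤ_[p])
      (IsLocalRing.maximalIdeal.isMaximal _).ne_top
    rw [← Submodule.mem_bot ℤ_[p], ← hK, Submodule.mem_iInf]
    intro n
    obtain ⟨y, hy⟩ := Ideal.mem_span_singleton.mp (PadicInt.appr_spec n x)
    obtain ⟨c, hc⟩ := hbdd y
    have hx : x = x.appr n + p ^ n * y := by rw [← hy]; ring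
    have heq : b - p * algebraMap ℤ_[p] _ x =
        (p ^ n : ℤ_[p]) • (c - p * algebraMap ℤ_[p] _ y) := by
      apply Subtype.ext
      rw [Algebra.smul_def]
      push_cast
      simp only [hb, hc]
      conv_lhs => rw [hx]
      simp only [map_add, map_mul, map_pow, map_natCast]
      ring
    rw [heq]
    refine Submodule.smul_mem_smul (Ideal.pow_mem_pow ?_ n) Submodule.mem_top
    rw [PadicInt.maximalIdeal_eq_span_p]
    exact Ideal.mem_span_singleton_self _
  have h0 := congr_arg (Subtype.val : integralClosure ℤ_[p] K → K) hzero
  have hpK : (p : K) ≠ 0 := by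
    rw [← map_natCast (algebraMap ℚ_[p] K), Ne, map_eq_zero]
    exact_mod_cast (Fact.out : p.Prime).ne_zero
  push_cast at h0
  rw [hb, ← mul_sub] at h0
  exact sub_eq_zero.mp ((mul_eq_zero.mp h0).resolve_left hpK)

lemma isIntegral_iff_of_comp_eq {R A E : Type*} [CommRing R] [CommRing A] [CommRing E]
    [Algebra R A] [Algebra.IsIntegral R A] [Algebra A E] [Algebra R E]
    (h : ∀ z : R, algebraMap A E (algebraMap R A z) = algebraMap R E z) (x : E) :
    IsIntegral A x ↔ IsIntegral R x := by
  have : IsScalarTower R A E := IsScalarTower.of_algebraMap_eq fun z => (h z).symm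
  exact ⟨fun hx => isIntegral_trans (A := A) x hx, fun hx => hx.tower_top⟩

/-- The ring of integers of a finite extension of `ℚ_[p]` is a principal ideal domain: it is a
Dedekind domain, and its maximal ideals all lie over the maximal ideal of `ℤ_[p]`, so there are
only finitely many of them. -/
lemma isPrincipalIdealRing_integralClosure (p : ℕ) [Fact p.Prime]
    (K : Type*) [Field K] [Algebra ℚ_[p] K] [FiniteDimensional ℚ_[p] K]
    [Algebra ℤ_[p] K] [IsScalarTower ℤ_[p] ℚ_[p] K] :
    IsPrincipalIdealRing (integralClosure ℤ_[p] K) := by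
  have : IsDedekindDomain (integralClosure ℤ_[p] K) :=
    IsIntegralClosure.isDedekindDomain ℤ_[p] ℚ_[p] K _
  have : Module.Finite ℤ_[p] (integralClosure ℤ_[p] K) :=
    IsIntegralClosure.finite ℤ_[p] ℚ_[p] K _
  refine IsPrincipalIdealRing.of_finite_maximals
    ((Algebra.QuasiFinite.finite_primesOver (S := integralClosure ℤ_[p] K)
      (IsLocalRing.maximalIdeal ℤ_[p])).subset fun P hP => ?_)
  have hP' : P.IsMaximal := hP
  have : (P.under ℤ_[p]).IsMaximal := Ideal.isMaximal_comap_of_isIntegral_of_isMaximal P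
  exact ⟨hP'.isPrime, ⟨(IsLocalRing.eq_maximalIdeal this).symm⟩⟩

/-- Fractional ideals of the ring of integers of a finite extension of `ℚ_[p]` are principal. -/
lemma exists_generator (p : ℕ) [Fact p.Prime]
    (K : Type*) [Field K] [Algebra ℚ_[p] K] [FiniteDimensional ℚ_[p] K]
    [Algebra ℤ_[p] K] [IsScalarTower ℤ_[p] ℚ_[p] K]
    (J : Submodule (integralClosure ℤ_[p] K) K) (hJ : J.FG) :
    ∃ u : K, J = Submodule.span _ {u} := by
  have := isPrincipalIdealRing_integralClosure p K
  have : IsFractionRing (integralClosure ℤ_[p] K) K :=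
    integralClosure.isFractionRing_of_finite_extension ℚ_[p] K
  exact (FractionalIdeal.isPrincipal
    (⟨J, FractionalIdeal.isFractional_of_fg hJ⟩ :
      FractionalIdeal (nonZeroDivisors (integralClosure ℤ_[p] K)) K)).principal

/-- If `f` is monic and kills `b`, then `X * f` is monic and kills `Pi.single m b`; the factor `X`
takes care of the zero coordinates. -/
lemma isIntegral_single {R ι : Type*} [CommRing R] [DecidableEq ι] {K : ι → Type*}
    [∀ m, CommRing (K m)] [∀ m, Algebra R (K m)] (m : ι) {b : K m} (hb : IsIntegral R b) :
    IsIntegral R (Pi.single m b : ∀ m, K m) := by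
  obtain ⟨f, hf, h0⟩ := hb
  refine ⟨Polynomial.X * f, Polynomial.monic_X.mul hf, ?_⟩
  rw [← Polynomial.aeval_def] at h0 ⊢
  funext n
  have h := Polynomial.aeval_algHom_apply (Pi.evalAlgHom R K n) (Pi.single m b) (Polynomial.X * f)
  simp only [Pi.evalAlgHom_apply] at h
  rw [← h, map_mul, Polynomial.aeval_X]
  by_cases hn : n = m
  · subst hn
    simp [h0]
  · simp [Pi.single_eq_of_ne hn]

/-- A lattice in a finite product of finite extensions of `ℚ_[p]` that is stable under the integral
elements and contains an element with no zero coordinate is principal, generated by a unit. -/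
lemma exists_generator_pi (p : ℕ) [Fact p.Prime] {ι : Type*} [Finite ι] (K : ι → Type*)
    [∀ m, Field (K m)] [∀ m, Algebra ℚ_[p] (K m)] [∀ m, FiniteDimensional ℚ_[p] (K m)]
    [∀ m, Algebra ℤ_[p] (K m)] [∀ m, IsScalarTower ℤ_[p] ℚ_[p] (K m)]
    (N : Submodule ℤ_[p] (∀ m, K m)) (hfg : N.FG)
    (hN : ∀ b : ∀ m, K m, IsIntegral ℤ_[p] b → ∀ x ∈ N, b * x ∈ N)
    (hne : ∃ x ∈ N, ∀ m, x m ≠ 0) :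
    ∃ u ∈ N, (∀ m, u m ≠ 0) ∧ ∀ x ∈ N, ∃ b, IsIntegral ℤ_[p] b ∧ x = b * u := by
  classical
  have := Fintype.ofFinite ι
  have hsingle : ∀ x ∈ N, ∀ m, Pi.single m (x m) ∈ N := by
    intro x hx m
    have := hN (Pi.single m 1) (isIntegral_single m isIntegral_one) x hx
    rwa [← Pi.single_mul_left, one_mul] at this
  have key : ∀ m, ∃ u : K m, Pi.single m u ∈ N ∧ ∀ x ∈ N, ∃ b : K m,
      IsIntegral ℤ_[p] b ∧ x m = b * u := by
    intro m
    let J : Submodule (integralClosure ℤ_[p] (K m)) (K m) :=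
      { carrier := {y | Pi.single m y ∈ N}
        add_mem' := fun {a b} ha hb => by
          simpa only [Set.mem_ofPred_eq, Pi.single_add] using N.add_mem ha hb
        zero_mem' := by simp
        smul_mem' := fun c y hy => by
          have := hN (Pi.single m (c : K m)) (isIntegral_single m c.2) _ hy
          rw [← Pi.single_mul] at this
          exact this }
    have hJ : J.restrictScalars ℤ_[p] = N.map (LinearMap.proj m) := by
      ext y
      constructor
      · intro hy
        exact ⟨Pi.single m y, hy, by simp⟩
      · rintro ⟨x, hx, rfl⟩
        exact hsingle x hx m
    obtain ⟨u, hu⟩ := exists_generator p (K m) J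
      (Submodule.FG.of_restrictScalars (R := ℤ_[p]) (hJ ▸ hfg.map _))
    refine ⟨u, ?_, fun x hx => ?_⟩
    · have : u ∈ J := hu ▸ Submodule.mem_span_singleton_self u
      exact this
    · have : x m ∈ J := hsingle x hx m
      rw [hu, Submodule.mem_span_singleton] at this
      obtain ⟨b, hb⟩ := this
      exact ⟨b, b.2, hb.symm⟩
  choose u hu hgen using key
  refine ⟨u, ?_, fun m hm => ?_, fun x hx => ?_⟩
  · rw [← Finset.univ_sum_single u]
    exact N.sum_mem fun m _ => hu m
  · obtain ⟨x, hx, hx0⟩ := hne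
    obtain ⟨b, -, hb⟩ := hgen m x hx
    exact hx0 m (by rw [hb, hm, mul_zero])
  · choose b hb hxb using fun m => hgen m x hx
    refine ⟨b, ?_, funext hxb⟩
    rw [← Finset.univ_sum_single b]
    exact IsIntegral.sum _ fun m _ => isIntegral_single m (hb m)

/-- A faithful representation of a finite product of fields has a vector with trivial annihilator:
sum up nonzero vectors, one in the image of each primitive idempotent. -/
lemma exists_separating_vector {F ι n : Type*} [Field F] [Finite ι] [Fintype n] [DecidableEq n]
    (K : ι → Type*) [∀ m, Field (K m)] [∀ m, Algebra F (K m)]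
    (i : (∀ m, K m) →ₐ[F] Matrix n n F) (hinj : Function.Injective i) :
    ∃ w : n → F, ∀ x, (i x).mulVec w = 0 → x = 0 := by
  classical
  have := Fintype.ofFinite ι
  have h1 : ∀ m, ∃ u : n → F, (i (Pi.single m 1)).mulVec u ≠ 0 := by
    intro m
    by_contra! h
    have h0 : i (Pi.single m 1) = 0 := Matrix.ext_of_mulVec_single fun j => by
      rw [h, Matrix.zero_mulVec]
    rw [← map_zero i] at h0
    have := congr_fun (hinj h0) m
    simp at this
  choose u hu using h1
  refine ⟨∑ m, (i (Pi.single m 1)).mulVec (u m), fun x hx => ?_⟩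
  by_contra hx0
  obtain ⟨m, hm⟩ := Function.ne_iff.mp hx0
  apply hu m
  have h2 := congr_arg (fun v => (i (Pi.single m (x m)⁻¹)).mulVec v) hx
  simp only [Matrix.mulVec_mulVec, ← map_mul, Matrix.mulVec_zero, Matrix.mulVec_sum] at h2
  rw [Finset.sum_eq_single m] at h2
  · have h3 : Pi.single m (x m)⁻¹ * (x * Pi.single m 1) = Pi.single m (1 : K m) := by
      rw [← Pi.single_mul_right, ← Pi.single_mul, mul_one, inv_mul_cancel₀ hm]
    rwa [h3] at h2
  · intro k _ hk
    have : Pi.single m (x m)⁻¹ * (x * Pi.single k 1) = 0 := by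
      funext l
      by_cases hl : l = k
      · subst hl
        simp [Pi.single_eq_of_ne hk]
      · simp [Pi.single_eq_of_ne hl]
    rw [this, map_zero, Matrix.zero_mulVec]
  · simp

/-- The result for an algebra presented as a finite product of fields. -/
lemma exists_generator_of_pi (p : ℕ) [Fact p.Prime]
    {F : Type*} [Field F] [Algebra ℚ_[p] F] [FiniteDimensional ℚ_[p] F]
    [Algebra ℤ_[p] F] [IsScalarTower ℤ_[p] ℚ_[p] F]
    {ι : Type*} [Finite ι] (K : ι → Type*)
    [∀ m, Field (K m)] [∀ m, Algebra ℚ_[p] (K m)]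
    [∀ m, Algebra ℤ_[p] (K m)] [∀ m, IsScalarTower ℤ_[p] ℚ_[p] (K m)]
    [∀ m, Algebra F (K m)] [∀ m, IsScalarTower ℚ_[p] F (K m)]
    [∀ m, IsScalarTower ℤ_[p] F (K m)]
    (hdim : Module.finrank F (∀ m, K m) = 3)
    (i : (∀ m, K m) →ₐ[F] Matrix (Fin 3) (Fin 3) F) (hinj : Function.Injective i)
    (hO : ∀ x, IsIntegral ℤ_[p] x → ∀ a b, IsIntegral ℤ_[p] (i x a b)) :
    ∃ v : Fin 3 → F, (∀ j, IsIntegral ℤ_[p] (v j)) ∧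
      Set.BijOn (fun x : ∀ m, K m => (i x).mulVec v)
        {x | IsIntegral ℤ_[p] x} {w : Fin 3 → F | ∀ j, IsIntegral ℤ_[p] (w j)} := by
  classical
  have hfin : FiniteDimensional F (∀ m, K m) := Module.finite_of_finrank_pos (by omega)
  have hfinK : ∀ m, FiniteDimensional ℚ_[p] (K m) := fun m =>
    have : FiniteDimensional F (K m) :=
      Module.Finite.of_surjective (LinearMap.proj m : (∀ m, K m) →ₗ[F] K m)
        (Function.surjective_eval m)
    FiniteDimensional.trans ℚ_[p] F (K m)
  obtain ⟨w, hw⟩ := exists_separating_vector K i hinj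
  let L : (∀ m, K m) →ₗ[F] (Fin 3 → F) :=
    { toFun := fun x => (i x).mulVec w
      map_add' := fun x y => by rw [map_add, Matrix.add_mulVec]
      map_smul' := fun c x => by rw [map_smul, Matrix.smul_mulVec, RingHom.id_apply] }
  have hLinj : Function.Injective L := (injective_iff_map_eq_zero L).mpr hw
  have hLsurj : Function.Surjective L :=
    (LinearMap.injective_iff_surjective_of_finrank_eq_finrank (by simp [hdim])).mp hLinj
  have hLmul : ∀ x y, L (x * y) = (i x).mulVec (L y) := fun x y => by
    simp [L, Matrix.mulVec_mulVec]
  -- matrices with integral entries preserve integral vectors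
  have hmul : ∀ b, IsIntegral ℤ_[p] b → ∀ v : Fin 3 → F, (∀ j, IsIntegral ℤ_[p] (v j)) →
      ∀ j, IsIntegral ℤ_[p] ((i b).mulVec v j) := fun b hb v hv j => by
    rw [Matrix.mulVec, dotProduct]
    exact IsIntegral.sum _ fun k _ => (hO b hb j k).mul (hv k)
  let N : Submodule ℤ_[p] (∀ m, K m) :=
    { carrier := {x | ∀ j, IsIntegral ℤ_[p] (L x j)}
      add_mem' := fun ha hb j => by
        rw [map_add]
        exact (ha j).add (hb j)
      zero_mem' := fun j => by
        rw [map_zero]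
        exact isIntegral_zero
      smul_mem' := fun c x hx j => by
        have : L (c • x) j = c • L x j := by
          rw [← algebraMap_smul F c x, map_smul, Pi.smul_apply, algebraMap_smul]
        rw [this]
        exact (hx j).smul c }
  have hfg : N.FG := by
    have : Module.Finite ℤ_[p] (integralClosure ℤ_[p] F) :=
      IsIntegralClosure.finite ℤ_[p] ℚ_[p] F _
    let g : N →ₗ[ℤ_[p]] (Fin 3 → integralClosure ℤ_[p] F) :=
      { toFun := fun x j => ⟨L x j, x.2 j⟩
        map_add' := fun x y => by
          ext j
          simp
        map_smul' := fun c x => by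
          ext j
          change L (c • (x : ∀ m, K m)) j = c • L x j
          rw [← algebraMap_smul F c (x : ∀ m, K m), map_smul, Pi.smul_apply, algebraMap_smul] }
    have hg : Function.Injective g := fun x y hxy => Subtype.ext <| hLinj <| funext fun j =>
      congr_arg Subtype.val (congr_fun hxy j)
    exact Module.Finite.iff_fg.mp (Module.Finite.of_injective g hg)
  obtain ⟨u, huN, hu0, hgen⟩ := exists_generator_pi p K N hfg
    (fun b hb x hx j => by
      rw [hLmul]
      exact hmul b hb _ hx j) (by
    -- clearing denominators of `w` puts a nonzero scalar in `N`
    obtain ⟨y, hy, hyw⟩ := exists_integral_multiples ℤ_[p] ℚ_[p] (Finset.univ.image w)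
    refine ⟨fun m => algebraMap ℤ_[p] (K m) y, fun j => ?_, fun m => ?_⟩
    · have h1 : (fun m => algebraMap ℤ_[p] (K m) y) =
          algebraMap F (∀ m, K m) (algebraMap ℤ_[p] F y) := by
        funext m
        simp [← IsScalarTower.algebraMap_apply]
      have h2 : L (fun m => algebraMap ℤ_[p] (K m) y) j = y • w j := by
        rw [h1, Algebra.algebraMap_eq_smul_one, map_smul]
        simp [L, Algebra.smul_def]
      rw [h2]
      exact hyw _ (by simp)
    · change algebraMap ℤ_[p] (K m) y ≠ 0
      rw [IsScalarTower.algebraMap_apply ℤ_[p] ℚ_[p] (K m)]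
      simpa using hy)
  refine ⟨L u, huN, fun b hb => hmul b hb _ huN, fun x _ y _ hxy => ?_, fun z hz => ?_⟩
  · have h : x * u = y * u := hLinj (by rw [hLmul, hLmul]; exact hxy)
    funext m
    exact mul_right_cancel₀ (hu0 m) (congr_fun h m)
  · obtain ⟨x, rfl⟩ := hLsurj z
    obtain ⟨b, hb, rfl⟩ := hgen x hz
    exact ⟨b, hb, (hLmul b u).symm⟩

/-- Let `F` be a p-adic field with ring of integers `O_F = integralClosure ℤ_[p] F`, let `E`
be a cubic étale `F`-algebra, `O_E` the integral closure of `O_F` in `E`, and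
`i : E → M₃(F)` an injective `F`-algebra homomorphism with `i(O_E) ⊆ M₃(O_F)`.  Then
`O_F³`, regarded as an `O_E`-module via `x · v := i(x)v`, is free of rank 1 over `O_E`:
there is a vector `v ∈ O_F³` such that `x ↦ i(x)·v` is a bijection from `O_E` onto
`O_F³` (this map is automatically `O_E`-linear, so it is an `O_E`-module isomorphism
`O_E ≅ O_F³`). -/
theorem stmt_9 (p : ℕ) [Fact p.Prime]
    {F : Type*} [Field F] [Algebra ℚ_[p] F] [FiniteDimensional ℚ_[p] F]
    [Algebra ℤ_[p] F] [IsScalarTower ℤ_[p] ℚ_[p] F]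
    {E : Type*} [CommRing E] [Algebra F E] [IsReduced E]
    (hdim : Module.finrank F E = 3)
    [Algebra (integralClosure ℤ_[p] F) E] [IsScalarTower (integralClosure ℤ_[p] F) F E]
    (i : E →ₐ[F] Matrix (Fin 3) (Fin 3) F) (hinj : Function.Injective i)
    (hO : ∀ x ∈ integralClosure (integralClosure ℤ_[p] F) E,
      ∀ a b, i x a b ∈ integralClosure ℤ_[p] F) :
    ∃ v : Fin 3 → F, (∀ j, v j ∈ integralClosure ℤ_[p] F) ∧
      Set.BijOn (fun x : E => (i x).mulVec v)
        (integralClosure (integralClosure ℤ_[p] F) E : Set E)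
        {w : Fin 3 → F | ∀ j, w j ∈ integralClosure ℤ_[p] F} := by

  have hfin : FiniteDimensional F E := Module.finite_of_finrank_pos (by omega)
  have : IsArtinianRing E := IsArtinianRing.of_finite F E
  let _ : Algebra ℤ_[p] E := ((algebraMap F E).comp (algebraMap ℤ_[p] F)).toAlgebra
  let _ : Algebra ℚ_[p] E := ((algebraMap F E).comp (algebraMap ℚ_[p] F)).toAlgebra
  have : IsScalarTower ℤ_[p] F E := IsScalarTower.of_algebraMap_eq fun _ => rfl
  have : IsScalarTower ℚ_[p] F E := IsScalarTower.of_algebraMap_eq fun _ => rfl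
  have : IsScalarTower ℤ_[p] ℚ_[p] E := IsScalarTower.of_algebraMap_eq fun x => by
    rw [IsScalarTower.algebraMap_apply ℤ_[p] F E, IsScalarTower.algebraMap_apply ℚ_[p] F E,
      ← IsScalarTower.algebraMap_apply ℤ_[p] ℚ_[p] F]
  let _ : ∀ m : MaximalSpectrum E, Field (E ⧸ m.asIdeal) := fun m => Ideal.Quotient.field _
  let Φ := IsArtinianRing.equivPi E
  have hfinQ : FiniteDimensional ℚ_[p] E := FiniteDimensional.trans ℚ_[p] F E
  -- The given action of `O_F` on `E` restricts to the canonical action of `ℤ_[p]`. This is automatic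
  -- for any ring homomorphism `O_F → E`: the action of `O_F` in the scalar tower hypothesis is the
  -- one inherited from `F`, so that hypothesis does not give it.
  have hcomp : ∀ z : ℤ_[p], algebraMap (integralClosure ℤ_[p] F) E
      (algebraMap ℤ_[p] (integralClosure ℤ_[p] F) z) = algebraMap ℤ_[p] E z := fun z =>
    Φ.injective <| funext fun m => ringHom_eq_algebraMap p (E ⧸ m.asIdeal)
      ((Ideal.Quotient.mk m.asIdeal).comp ((algebraMap (integralClosure ℤ_[p] F) E).comp
        (algebraMap ℤ_[p] (integralClosure ℤ_[p] F)))) z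
  have hint : ∀ x : E, x ∈ integralClosure (integralClosure ℤ_[p] F) E ↔ IsIntegral ℤ_[p] x :=
    isIntegral_iff_of_comp_eq hcomp
  let Ψ : E ≃ₐ[F] ∀ m : MaximalSpectrum E, E ⧸ m.asIdeal := Φ.restrictScalars F
  have hΨ : ∀ x, IsIntegral ℤ_[p] (Ψ x) ↔ IsIntegral ℤ_[p] x := fun x =>
    isIntegral_algEquiv (Ψ.restrictScalars ℤ_[p])
  obtain ⟨v, hv, hbij⟩ := exists_generator_of_pi p (F := F)
    (fun m : MaximalSpectrum E => E ⧸ m.asIdeal)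
    (by rw [← Ψ.toLinearEquiv.finrank_eq, hdim]) (i.comp Ψ.symm.toAlgHom)
    (hinj.comp Ψ.symm.injective)
    (fun x hx => hO _ ((hint _).mpr ((hΨ _).mp (by simpa using hx))))
  refine ⟨v, hv, ?_⟩
  have hΨbij : Set.BijOn Ψ (integralClosure (integralClosure ℤ_[p] F) E : Set E)
      {x | IsIntegral ℤ_[p] x} :=
    Ψ.toEquiv.bijOn fun x => (hΨ x).trans (hint x).symm
  refine (hbij.comp hΨbij).congr fun x _ => ?_
  simp
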